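/- (Coefficient identity underlying Lemma 4.1, vector form) Let n ≥ 1, let ρ, λ, μ ∈ ℕⁿ and α ∈ ℤⁿ. Then in ℚ(v): [ρ+α ∣ μ] · [α ∣ λ] = Σ_{ν ∈ ℕⁿ, ν ≤ μ} b_ν · v^{−α·ν} · [α ∣ λ+μ−ν], where for each ν ≤ μ the coefficient b_ν is the finite sum b_ν = Σ_{j ∈ ℕⁿ, ν−λ ≤ j ≤ ν} v^{ρ·(μ−j) + λ·(μ−j)} · [ρ ∣ j] · ∏_{i=1}^n [λ_i+μ_i−ν_i ; ν_i−j_i, λ_i−ν_i+j_i, μ_i−ν_i] (the sum over all j ∈ ℕⁿ with j ≤ ν and ν−λ ≤ j componentwise, i.e. ν_i − λ_i ≤ j_i ≤ ν_i for all i). -/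

import Mathlib

open Finset

noncomputable section

/-- The field `ℚ(v)` of rational functions over `ℚ`. -/
abbrev K : Type := RatFunc ℚ

/-- The indeterminate `v`. -/
def v : K := RatFunc.X

/-- `[i] = (v^i - v^{-i})/(v - v^{-1})`. -/
def qint (i : ℤ) : K := (v ^ i - v ^ (-i)) / (v - v⁻¹)

/-- `[t]! = [1][2]⋯[t]`. -/
def qfact (t : ℕ) : K := ∏ s ∈ Finset.range t, qint (s + 1)

/-- The Gaussian binomial coefficient `[N ∣ t] = ([N][N-1]⋯[N-t+1])/[t]!`. -/
def qbinom (N : ℤ) (t : ℕ) : K := (∏ s ∈ Finset.range t, qint (N - s)) / qfact t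

/-- The q-trinomial coefficient `[a+b+c ; a, b, c] = [a+b+c]!/([a]![b]![c]!)`. -/
def qtri (a b c : ℕ) : K := qfact (a + b + c) / (qfact a * qfact b * qfact c)

/-- `[μ ∣ λ] = ∏ i, [μ i ∣ λ i]` for `μ ∈ ℤⁿ`, `λ ∈ ℕⁿ`. -/
def qbinomV {n : ℕ} (μ : Fin n → ℤ) (lam : Fin n → ℕ) : K := ∏ i, qbinom (μ i) (lam i)

/-- `μ · δ = ∑ i, μ i * δ i`. -/
def dotZ {n : ℕ} (a b : Fin n → ℤ) : ℤ := ∑ i, a i * b i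

theorem v_ne_zero : v ≠ 0 := RatFunc.X_ne_zero

theorem v_pow_ne_one (m : ℕ) (hm : m ≠ 0) : v ^ m ≠ 1 := by
  intro h
  have h1 : (algebraMap (Polynomial ℚ) K) (Polynomial.X ^ m) = algebraMap (Polynomial ℚ) K 1 := by
    rw [map_pow, map_one, RatFunc.algebraMap_X]; exact h
  have h2 := RatFunc.algebraMap_injective ℚ h1
  have h3 := congrArg Polynomial.natDegree h2
  simp at h3
  exact hm h3

theorem v_sub_ne : v - v⁻¹ ≠ 0 := by
  intro h
  apply v_pow_ne_one 2 (by norm_num)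
  have := v_ne_zero
  field_simp at h
  linear_combination h

theorem qint_ne (s : ℕ) : qint ((s : ℤ) + 1) ≠ 0 := by
  unfold qint
  refine div_ne_zero ?_ v_sub_ne
  intro h
  apply v_pow_ne_one (2 * (s + 1)) (by omega)
  have h0 := v_ne_zero
  have h1 : v ^ ((s : ℤ) + 1) = v ^ (-((s : ℤ) + 1)) := sub_eq_zero.mp h
  have h2 : v ^ ((s : ℤ) + 1) * v ^ ((s : ℤ) + 1) = 1 := by
    nth_rewrite 2 [h1]
    rw [← zpow_add₀ h0]; simp
  rw [← zpow_add₀ h0] at h2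
  rw [← zpow_natCast, ← h2]
  congr 1
  push_cast; ring

theorem qfact_ne (t : ℕ) : qfact t ≠ 0 :=
  Finset.prod_ne_zero_iff.mpr fun s _ => qint_ne s

theorem qfact_succ (t : ℕ) : qfact (t + 1) = qfact t * qint (t + 1) :=
  Finset.prod_range_succ _ _

def qff (N : ℤ) (t : ℕ) : K := ∏ s ∈ Finset.range t, qint (N - s)

theorem qbinom_eq (N : ℤ) (t : ℕ) : qbinom N t = qff N t / qfact t := rfl

theorem qff_add (N : ℤ) (a b : ℕ) : qff N (a + b) = qff N a * qff (N - a) b := by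
  unfold qff
  rw [Finset.prod_range_add]
  congr 1
  apply Finset.prod_congr rfl
  intro s _
  congr 1
  push_cast; ring

theorem qff_succ_left (N : ℤ) (t : ℕ) : qff (N + 1) (t + 1) = qint (N + 1) * qff N t := by
  rw [add_comm t 1, qff_add]
  congr 1
  · simp [qff]
  · simp

theorem qff_succ (N : ℤ) (t : ℕ) : qff N (t + 1) = qff N t * qint (N - t) :=
  Finset.prod_range_succ _ _

theorem qff_self (n : ℕ) : qff n n = qfact n := by
  induction n with
  | zero => simp [qff, qfact]
  | succ k ih =>
    push_cast
    rw [qff_succ_left, ih, qfact_succ, mul_comm]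

theorem qff_zero (n t : ℕ) (h : n < t) : qff n t = 0 := by
  apply Finset.prod_eq_zero (Finset.mem_range.mpr h)
  simp [qint]

theorem qbinom_zero (n t : ℕ) (h : n < t) : qbinom n t = 0 := by
  rw [qbinom_eq, qff_zero n t h, zero_div]

theorem qbinom_nat (a b : ℕ) : qbinom ((a + b : ℕ) : ℤ) a = qfact (a + b) / (qfact a * qfact b) := by
  rw [qbinom_eq, ← qff_self (a + b), qff_add]
  have : (((a + b : ℕ) : ℤ) - a) = b := by push_cast; ring
  rw [this, qff_self]
  have := qfact_ne a
  have := qfact_ne b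
  field_simp

theorem qint_pascal (N : ℤ) (t : ℕ) :
    qint (N + 1) = v ^ ((t : ℤ) + 1) * qint (N - t) + v ^ (-(N - t)) * qint (t + 1) := by
  unfold qint
  have h0 := v_ne_zero
  rw [mul_div_assoc', mul_div_assoc', ← add_div]
  congr 1
  rw [mul_sub, mul_sub]
  simp only [← zpow_add₀ h0]
  have e1 : (t : ℤ) + 1 + (N - t) = N + 1 := by ring
  have e2 : -(N - t) + ((t : ℤ) + 1) = (t : ℤ) + 1 + -(N - t) := by ring
  have e3 : -(N - t) + -((t : ℤ) + 1) = -(N + 1) := by ring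
  rw [e1, e2, e3]; ring

theorem qbinom_pascal (N : ℤ) (t : ℕ) :
    qbinom (N + 1) (t + 1) =
      v ^ ((t : ℤ) + 1) * qbinom N (t + 1) + v ^ (-(N - t)) * qbinom N t := by
  simp only [qbinom_eq]
  rw [qff_succ_left, qff_succ, qfact_succ, qint_pascal N t]
  have := qfact_ne t
  have := qint_ne t
  field_simp

theorem qbinom_t0 (N : ℤ) : qbinom N 0 = 1 := by simp [qbinom, qfact]

theorem vandermonde (ρ : ℕ) (α : ℤ) (m : ℕ) :
    qbinom (ρ + α) m = ∑ j ∈ Finset.range (m + 1),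
      v ^ ((ρ : ℤ) * ((m : ℤ) - j) - α * j) * qbinom ρ j * qbinom α (m - j) := by
  have h0 := v_ne_zero
  induction ρ generalizing m with
  | zero =>
    rw [Finset.sum_range_succ', Finset.sum_eq_zero]
    · simp [qbinom_t0]
    · intro j _
      rw [qbinom_zero 0 (j + 1) (by omega)]; simp
  | succ ρ ih =>
    cases m with
    | zero => simp [qbinom_t0]
    | succ m =>
      have e : ((ρ + 1 : ℕ) : ℤ) + α = (ρ + α) + 1 := by push_cast; ring
      rw [e, qbinom_pascal, ih, ih, Finset.sum_range_succ' _ (m + 1),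
        Finset.sum_range_succ' _ (m + 1), mul_add, Finset.mul_sum, Finset.mul_sum,
        add_right_comm, ← Finset.sum_add_distrib]
      congr 1
      · apply Finset.sum_congr rfl
        intro j _
        push_cast
        rw [qbinom_pascal ρ j]
        simp only [mul_add, add_mul, ← mul_assoc, ← zpow_add₀ h0]
        congr 1
        · congr 3; ring_nf
        · congr 3; ring_nf
      · simp only [qbinom_t0, ← mul_assoc, ← zpow_add₀ h0]
        congr 3
        push_cast; ring

theorem prod_step (lam : ℕ) (α : ℤ) (m : ℕ) :
    qbinom α m * qbinom α lam = ∑ k ∈ Finset.range (m + 1),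
      if k ≤ lam then v ^ ((lam : ℤ) * m - α * k) * qtri k (lam - k) (m - k) *
        qbinom α (lam + m - k) else 0 := by
  have e : α = (lam : ℤ) + (α - lam) := by ring
  have h := vandermonde lam (α - lam) m
  rw [← e] at h
  rw [h, Finset.sum_mul]
  apply Finset.sum_congr rfl
  intro k hk
  rw [Finset.mem_range] at hk
  split_ifs with hkl
  · obtain ⟨a, rfl⟩ := Nat.exists_eq_add_of_le hkl
    obtain ⟨b, rfl⟩ := Nat.exists_eq_add_of_le (Nat.lt_succ_iff.mp hk)
    have e1 : k + a + (k + b) - k = (k + a) + b := by omega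
    rw [e1, qbinom_nat, Nat.add_sub_cancel_left, Nat.add_sub_cancel_left]
    simp only [qbinom_eq, qtri]
    rw [qff_add α (k + a) b]
    have e2 : ((k + a : ℕ) : ℤ) * (((k + b : ℕ) : ℤ) - k) - (α - ((k + a : ℕ) : ℤ)) * k
      = ((k + a : ℕ) : ℤ) * ((k + b : ℕ) : ℤ) - α * k := by ring
    rw [e2]
    have := qfact_ne k
    have := qfact_ne a
    have := qfact_ne b
    have := qfact_ne (k + a)
    have := qfact_ne (k + a + b)
    field_simp
  · rw [qbinom_zero lam k (by omega)]; simp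

theorem scalar (ρ lam μ : ℕ) (α : ℤ) :
    qbinom ((ρ : ℤ) + α) μ * qbinom α lam =
      ∑ ν ∈ Finset.Iic μ, ∑ j ∈ (Finset.Iic ν).filter (fun j => ν ≤ lam + j),
        v ^ ((ρ : ℤ) * ((μ : ℤ) - j) + lam * ((μ : ℤ) - j)) * qbinom ρ j *
          qtri (ν - j) (lam + j - ν) (μ - ν) * v ^ (-(α * ν)) * qbinom α (lam + μ - ν) := by
  have h0 := v_ne_zero
  simp only [Finset.sum_filter]
  rw [Finset.sum_comm' (t' := Finset.range (μ + 1)) (s' := fun j => Finset.Ico j (μ + 1))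
    (by intro x y; simp only [Finset.mem_Iic, Finset.mem_range, Finset.mem_Ico]; omega)]
  rw [vandermonde, Finset.sum_mul]
  apply Finset.sum_congr rfl
  intro j hj
  rw [Finset.mem_range] at hj
  rw [mul_assoc, prod_step, Finset.mul_sum, Finset.sum_Ico_eq_sum_range,
    show μ + 1 - j = μ - j + 1 by omega]
  apply Finset.sum_congr rfl
  intro k hk
  rw [Finset.mem_range] at hk
  by_cases hkl : k ≤ lam
  · rw [if_pos hkl, if_pos (by omega)]
    rw [show j + k - j = k by omega, show lam + j - (j + k) = lam - k by omega,
      show μ - (j + k) = μ - j - k by omega, show lam + μ - (j + k) = lam + (μ - j) - k by omega]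
    have e : v ^ ((ρ : ℤ) * ((μ : ℤ) - j) - α * j) * v ^ ((lam : ℤ) * ((μ - j : ℕ) : ℤ) - α * k) =
      v ^ ((ρ : ℤ) * ((μ : ℤ) - j) + lam * ((μ : ℤ) - j)) * v ^ (-(α * ((j + k : ℕ) : ℤ))) := by
      rw [← zpow_add₀ h0, ← zpow_add₀ h0, Nat.cast_sub (by omega)]
      congr 1
      push_cast; ring
    linear_combination (qbinom ρ j * qtri k (lam - k) (μ - j - k) *
      qbinom α (lam + (μ - j) - k)) * e
  · rw [if_neg hkl, if_neg (by omega), mul_zero]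

theorem zpow_sum' {n : ℕ} (f : Fin n → ℤ) : v ^ (∑ i, f i) = ∏ i, v ^ (f i) := by
  have h0 := v_ne_zero
  generalize (Finset.univ : Finset (Fin n)) = s
  induction s using Finset.induction_on with
  | empty => simp
  | insert a s ha ih => rw [Finset.sum_insert ha, Finset.prod_insert ha, zpow_add₀ h0, ih]

/-- The coefficient identity underlying Lemma 4.1 (vector form):
`[ρ+α ∣ μ]·[α ∣ λ] = ∑_{ν ≤ μ} b_ν v^{-α·ν} [α ∣ λ+μ-ν]`, where
`b_ν = ∑_{ν-λ ≤ j ≤ ν} v^{ρ·(μ-j)+λ·(μ-j)} [ρ ∣ j]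
   ∏ i, [λ_i+μ_i-ν_i ; ν_i-j_i, λ_i-ν_i+j_i, μ_i-ν_i]`. -/
theorem lemma_4_1_vector (n : ℕ) (hn : 1 ≤ n) (ρ lam μ : Fin n → ℕ) (α : Fin n → ℤ) :
    qbinomV (fun i => (ρ i : ℤ) + α i) μ * qbinomV α lam =
      ∑ ν ∈ Finset.Iic μ,
        (∑ j ∈ (Finset.Iic ν).filter (fun j => ∀ i, ν i ≤ lam i + j i),
            v ^ (dotZ (fun i => (ρ i : ℤ)) (fun i => (μ i : ℤ) - (j i : ℤ)) +
                  dotZ (fun i => (lam i : ℤ)) (fun i => (μ i : ℤ) - (j i : ℤ))) *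
              qbinomV (fun i => (ρ i : ℤ)) j *
              ∏ i, qtri (ν i - j i) (lam i + j i - ν i) (μ i - ν i)) *
          v ^ (-dotZ α (fun i => (ν i : ℤ))) *
          qbinomV α (fun i => lam i + μ i - ν i) := by
  unfold qbinomV
  rw [← Finset.prod_mul_distrib]
  simp only [scalar]
  rw [Finset.prod_univ_sum]
  have e1 : Fintype.piFinset (fun i => Finset.Iic (μ i)) = Finset.Iic μ := by
    ext x; simp [Pi.le_def]
  rw [e1]
  apply Finset.sum_congr rfl
  intro ν _
  rw [Finset.prod_univ_sum]
  have e2 : Fintype.piFinset (fun i => (Finset.Iic (ν i)).filter (fun j => ν i ≤ lam i + j)) =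
      (Finset.Iic ν).filter (fun j => ∀ i, ν i ≤ lam i + j i) := by
    ext x; simp [Pi.le_def, forall_and]
  rw [e2, Finset.sum_mul, Finset.sum_mul]
  apply Finset.sum_congr rfl
  intro j _
  unfold dotZ
  rw [← Finset.sum_add_distrib, ← Finset.sum_neg_distrib, zpow_sum', zpow_sum']
  simp only [Finset.prod_mul_distrib]
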